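/- If f is a convex univalent mapping of the unit disk with f(0)=0, f'(0)=1, and second Taylor coefficient a₂, then Re(a₂·f(ζ)) ≥ -1/2 + (1/2)(1-|ζ|²)|f(ζ)/ζ|² for all ζ in the unit disk; in particular Re(a₂·f(ζ)) > -1/2. -/

import Mathlib

open Complex Metric

/-!
If `f` is a convex univalent function, Schwarz's lemma applied to the pullback under `f` of a convex
combination of `f s` and `f (u s)`, `‖u‖ ≤ 1`, shows that every concentric subdisk has convex image.
Hence `‖f⁻¹‖` attains its maximum over the convex set `f (closedBall 0 ‖z‖)` at `f z`, which is the
boundary inequality `Re (z f'(z) / (f z - f ζ)) ≥ 0` for `‖ζ‖ ≤ ‖z‖`. On `‖ζ‖ = ‖z‖` the term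
`(z + ζ) / (z - ζ)` of the convexity kernel is purely imaginary, so the maximum principle, first in
`ζ` and then in `z`, gives the kernel a nonnegative real part on the whole bidisk.

For fixed `ζ` the kernel is `1 + 2 s q(s)` with `q` the logarithmic derivative of the difference
quotient of `f` at `ζ`. Thus `q / (1 + s q)`, a Cayley transform divided by `s`, maps the disk into
its closure, and Schwarz–Pick at `0` reads `‖q'(0) - q(0)²‖ ≤ 1 - ‖q(0)‖²`. With `w = f ζ` this is
`2 ‖w / ζ - 1 - a₂ w‖ ≤ ‖w‖² - ‖w / ζ - 1‖²`, whose real part is the estimate.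
-/

open Filter Set Topology
open scoped ComplexConjugate InnerProductSpace

section Univalent

variable {f g : ℂ → ℂ} {U : Set ℂ} {z : ℂ}

theorem not_eventually_eq_of_injOn (hU : U ∈ 𝓝 z) (hinj : InjOn f U) :
    ¬∀ᶠ w in 𝓝 z, f w = f z := fun hconst ↦ by
  obtain ⟨w, ⟨hwU, hw⟩, hne⟩ :=
    ((hconst.and hU).filter_mono nhdsWithin_le_nhds |>.and self_mem_nhdsWithin).exists
      (f := 𝓝[≠] z)
  exact hne (hinj hw (mem_of_mem_nhds hU) hwU)

theorem map_nhds_eq_of_injOn (hU : IsOpen U) (hf : DifferentiableOn ℂ f U) (hinj : InjOn f U)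
    (hz : z ∈ U) : map f (𝓝 z) = 𝓝 (f z) := by
  have hzU := hU.mem_nhds hz
  refine le_antisymm (hf.differentiableAt hzU).continuousAt ?_
  exact (hf.analyticAt hzU).eventually_constant_or_nhds_le_map_nhds.resolve_left
    (not_eventually_eq_of_injOn hzU hinj)

theorem continuousAt_of_leftInvOn (hU : IsOpen U) (hf : DifferentiableOn ℂ f U)
    (hg : LeftInvOn g f U) (hz : z ∈ U) : ContinuousAt g (f z) := by
  have hgf : g ∘ f =ᶠ[𝓝 z] id := hg.eqOn.eventuallyEq_of_mem (hU.mem_nhds hz)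
  rw [ContinuousAt, ← map_nhds_eq_of_injOn hU hf hg.injOn hz, hg hz, tendsto_map'_iff,
    tendsto_congr' hgf]
  exact tendsto_id

theorem eventually_mem_and_apply_eq_of_leftInvOn (hU : IsOpen U) (hf : DifferentiableOn ℂ f U)
    (hg : LeftInvOn g f U) (hz : z ∈ U) : ∀ᶠ w in 𝓝 (f z), g w ∈ U ∧ f (g w) = w := by
  rw [← map_nhds_eq_of_injOn hU hf hg.injOn hz, eventually_map]
  filter_upwards [hU.mem_nhds hz] with y hy
  simp [hg hy, hy]

theorem eventually_deriv_ne_zero_of_injOn (hU : U ∈ 𝓝 z) (hf : DifferentiableOn ℂ f U)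
    (hinj : InjOn f U) : ∀ᶠ w in 𝓝[≠] z, deriv f w ≠ 0 := by
  have hfz : AnalyticAt ℂ f z := hf.analyticAt hU
  refine hfz.deriv.eventually_eq_zero_or_eventually_ne_zero.resolve_left fun hzero ↦ ?_
  have horder : analyticOrderAt (f · - f z) z = ⊤ := by
    rw [← hfz.analyticOrderAt_deriv_add_one, analyticOrderAt_eq_top.2 hzero, top_add]
  refine not_eventually_eq_of_injOn hU hinj ?_
  simpa only [sub_eq_zero] using analyticOrderAt_eq_top.1 horder

theorem hasDerivAt_of_leftInvOn_of_deriv_ne_zero (hU : IsOpen U) (hf : DifferentiableOn ℂ f U)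
    (hg : LeftInvOn g f U) (hz : z ∈ U) (hderiv : deriv f z ≠ 0) :
    HasDerivAt g (deriv f z)⁻¹ (f z) := by
  refine .of_local_left_inverse (f := f) (continuousAt_of_leftInvOn hU hf hg hz) ?_ hderiv
    ((eventually_mem_and_apply_eq_of_leftInvOn hU hf hg hz).mono fun _ ↦ And.right)
  rw [hg hz]
  exact (hf.differentiableAt (hU.mem_nhds hz)).hasDerivAt

/- The inverse is continuous at `f z` and holomorphic in a punctured neighbourhood, hence
holomorphic at `f z`. -/
theorem differentiableAt_of_leftInvOn (hU : IsOpen U) (hf : DifferentiableOn ℂ f U)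
    (hg : LeftInvOn g f U) (hz : z ∈ U) : DifferentiableAt ℂ g (f z) := by
  have hcont := continuousAt_of_leftInvOn hU hf hg hz
  have hright := (eventually_mem_and_apply_eq_of_leftInvOn hU hf hg hz).filter_mono
    (nhdsWithin_le_nhds (s := {f z}ᶜ))
  have hpunctured : Tendsto g (𝓝[≠] f z) (𝓝[≠] z) := by
    refine tendsto_nhdsWithin_iff.2 ⟨?_, ?_⟩
    · simpa only [hg hz] using hcont.tendsto.mono_left nhdsWithin_le_nhds
    · filter_upwards [hright, self_mem_nhdsWithin] with w hw hne hgw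
      exact hne (hw.2.symm.trans (congrArg f hgw))
  have hderiv := hpunctured.eventually
    (eventually_deriv_ne_zero_of_injOn (hU.mem_nhds hz) hf hg.injOn)
  refine (analyticAt_of_differentiable_on_punctured_nhds_of_continuousAt ?_ hcont).differentiableAt
  filter_upwards [hright, hderiv] with w ⟨hwU, hw⟩ hne
  exact hw ▸ (hasDerivAt_of_leftInvOn_of_deriv_ne_zero hU hf hg hwU hne).differentiableAt

theorem deriv_ne_zero_of_injOn (hU : IsOpen U) (hf : DifferentiableOn ℂ f U) (hinj : InjOn f U)
    (hz : z ∈ U) : deriv f z ≠ 0 := fun hzero ↦ by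
  have hg : LeftInvOn (Function.invFunOn f U) f U := hinj.leftInvOn_invFunOn
  have hcomp := (differentiableAt_of_leftInvOn hU hf hg hz).hasDerivAt.comp z
    (hf.differentiableAt (hU.mem_nhds hz)).hasDerivAt
  have hid : HasDerivAt (Function.invFunOn f U ∘ f) 1 z :=
    (hasDerivAt_id z).congr_of_eventuallyEq (hg.eqOn.eventuallyEq_of_mem (hU.mem_nhds hz))
  simpa [hzero] using hcomp.unique hid

theorem hasDerivAt_of_leftInvOn (hU : IsOpen U) (hf : DifferentiableOn ℂ f U)
    (hg : LeftInvOn g f U) (hz : z ∈ U) : HasDerivAt g (deriv f z)⁻¹ (f z) :=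
  hasDerivAt_of_leftInvOn_of_deriv_ne_zero hU hf hg hz (deriv_ne_zero_of_injOn hU hf hg.injOn hz)

theorem dslope_ne_zero_of_injOn (hU : IsOpen U) (hf : DifferentiableOn ℂ f U) (hinj : InjOn f U)
    {ζ : ℂ} (hζ : ζ ∈ U) (hz : z ∈ U) : dslope f ζ z ≠ 0 := by
  rcases eq_or_ne z ζ with rfl | hne
  · rw [dslope_same]
    exact deriv_ne_zero_of_injOn hU hf hinj hz
  · rw [dslope_of_ne f hne, slope_def_field]
    exact div_ne_zero (sub_ne_zero.2 (hinj.ne hz hζ hne)) (sub_ne_zero.2 hne)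

end Univalent

section ConvexImage

variable {f : ℂ → ℂ} {R r : ℝ} {z ζ : ℂ}

/- Schwarz's lemma for `s ↦ f⁻¹(a • f s + b • f ((ζ / z) s))`, evaluated at `s = z`. -/
theorem exists_norm_le_and_apply_eq_of_convex_image (hf : DifferentiableOn ℂ f (ball 0 R))
    (hinj : InjOn f (ball 0 R)) (hconv : Convex ℝ (f '' ball 0 R)) (hz : z ∈ ball 0 R)
    (hle : ‖ζ‖ ≤ ‖z‖) {a b : ℝ} (ha : 0 ≤ a) (hb : 0 ≤ b) (hab : a + b = 1) :
    ∃ y, ‖y‖ ≤ ‖z‖ ∧ f y = a • f z + b • f ζ := by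
  obtain ⟨u, hu, rfl⟩ : ∃ u : ℂ, ‖u‖ ≤ 1 ∧ u * z = ζ := by
    rcases eq_or_ne z 0 with rfl | hz0
    · exact ⟨0, by simp, by simpa [eq_comm] using hle⟩
    · exact ⟨ζ / z, by simpa using div_le_one_of_le₀ hle (norm_nonneg z), div_mul_cancel₀ ζ hz0⟩
  have hmul : MapsTo (u * ·) (ball 0 R) (ball 0 R) := fun s hs ↦ by
    simp only [mem_ball_zero_iff, norm_mul] at hs ⊢
    exact (mul_le_of_le_one_left (norm_nonneg s) hu).trans_lt hs
  set g := Function.invFunOn f (ball 0 R)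
  have hg : LeftInvOn g f (ball 0 R) := hinj.leftInvOn_invFunOn
  let h : ℂ → ℂ := fun s ↦ a • f s + b • f (u * s)
  have hh : MapsTo h (ball 0 R) (f '' ball 0 R) := fun s hs ↦
    hconv ⟨s, hs, rfl⟩ ⟨u * s, hmul hs, rfl⟩ ha hb hab
  have hgh : MapsTo (g ∘ h) (ball 0 R) (ball 0 R) := fun s hs ↦
    Function.invFunOn_mem (hh hs)
  have hgh_diff : DifferentiableOn ℂ (g ∘ h) (ball 0 R) := by
    refine DifferentiableOn.comp (t := f '' ball 0 R) ?_ ?_ hh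
    · rintro _ ⟨y, hy, rfl⟩
      exact (differentiableAt_of_leftInvOn isOpen_ball hf hg hy).differentiableWithinAt
    · have hscaled := hf.comp (by fun_prop) hmul
      exact (hf.const_smul a).add (hscaled.const_smul b)
  have hgh_zero : (g ∘ h) 0 = 0 := by
    have h0 : h 0 = f 0 := by simp [h, ← add_mul, ← ofReal_add, hab]
    simpa [h0] using hg (mem_ball_self (pos_of_mem_ball hz))
  refine ⟨g (h z), norm_le_norm_of_mapsTo_ball hgh_diff
    (hgh.mono_right ball_subset_closedBall) hgh_zero (mem_ball_zero_iff.1 hz), ?_⟩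
  exact Function.invFunOn_eq (hh hz)

theorem convex_image_closedBall (hf : DifferentiableOn ℂ f (ball 0 R))
    (hinj : InjOn f (ball 0 R)) (hconv : Convex ℝ (f '' ball 0 R)) (hr : r < R) :
    Convex ℝ (f '' closedBall 0 r) := by
  rintro _ ⟨z, hz, rfl⟩ _ ⟨ζ, hζ, rfl⟩ a b ha hb hab
  wlog hle : ‖ζ‖ ≤ ‖z‖ generalizing z ζ a b
  · rw [add_comm]
    exact this ζ hζ z hz hb ha (by rwa [add_comm]) (le_of_not_ge hle)
  obtain ⟨y, hy, hfy⟩ := exists_norm_le_and_apply_eq_of_convex_image hf hinj hconv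
    (closedBall_subset_ball hr hz) hle ha hb hab
  exact ⟨y, mem_closedBall_zero_iff.2 (hy.trans (mem_closedBall_zero_iff.1 hz)), hfy⟩

theorem inner_fderiv_sub_nonpos_of_isMaxOn_norm {E F : Type*} [NormedAddCommGroup E]
    [NormedSpace ℝ E] [NormedAddCommGroup F] [InnerProductSpace ℝ F] {g : E → F} {g' : E →L[ℝ] F}
    {K : Set E} {x y : E} (hK : Convex ℝ K) (hx : x ∈ K) (hy : y ∈ K) (hg : HasFDerivAt g g' x)
    (hmax : IsMaxOn (‖g ·‖) K x) : ⟪g x, g' (y - x)⟫_ℝ ≤ 0 := by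
  have hmax_sq : IsMaxOn (‖g ·‖ ^ 2) K x := fun v hv ↦
    pow_le_pow_left₀ (norm_nonneg _) (hmax hv) 2
  have hderiv := hmax_sq.localize.hasFDerivWithinAt_nonpos hg.norm_sq.hasFDerivWithinAt
    (sub_mem_posTangentConeAt_of_segment_subset (hK.segment_subset hx hy))
  have htwo : 2 * ⟪g x, g' (y - x)⟫_ℝ ≤ 0 := by simpa using hderiv
  linarith

theorem re_mul_deriv_div_sub_nonneg (hf : DifferentiableOn ℂ f (ball 0 R))
    (hinj : InjOn f (ball 0 R)) (hconv : Convex ℝ (f '' ball 0 R)) (hz : z ∈ ball 0 R)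
    (hle : ‖ζ‖ ≤ ‖z‖) : 0 ≤ (z * deriv f z / (f z - f ζ)).re := by
  set g := Function.invFunOn f (ball 0 R)
  have hg : LeftInvOn g f (ball 0 R) := hinj.leftInvOn_invFunOn
  have hzR : ‖z‖ < R := mem_ball_zero_iff.1 hz
  have hmax : IsMaxOn (‖g ·‖) (f '' closedBall 0 ‖z‖) (f z) := by
    rintro _ ⟨y, hy, rfl⟩
    simpa [hg hz, hg (closedBall_subset_ball hzR hy)] using hy
  have hinner := inner_fderiv_sub_nonpos_of_isMaxOn_norm
    (convex_image_closedBall hf hinj hconv hzR)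
    (mem_image_of_mem f (mem_closedBall_zero_iff.2 le_rfl))
    (mem_image_of_mem f (mem_closedBall_zero_iff.2 hle))
    ((hasDerivAt_of_leftInvOn isOpen_ball hf hg hz).hasFDerivAt.restrictScalars ℝ) hmax
  have hre : ((f ζ - f z) * (deriv f z)⁻¹ * conj z).re ≤ 0 := by
    simpa [hg hz, Complex.inner] using hinner
  have hinv : (z * deriv f z / (f z - f ζ))⁻¹
      = -((f ζ - f z) * (deriv f z)⁻¹ * conj z) * ((normSq z)⁻¹ : ℝ) := by
    rw [inv_div, mul_comm z, div_eq_mul_inv, mul_inv, inv_def z]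
    ring
  have hinv_re : 0 ≤ ((z * deriv f z / (f z - f ζ))⁻¹).re := by
    rw [hinv, re_mul_ofReal, neg_re]
    exact mul_nonneg (neg_nonneg.2 hre) (inv_nonneg.2 (normSq_nonneg z))
  rw [← inv_inv (_ / _), inv_re]
  exact div_nonneg hinv_re (normSq_nonneg _)

end ConvexImage

section MaximumPrinciple

theorem re_nonneg_of_forall_mem_frontier {E : Type*} [NormedAddCommGroup E] [NormedSpace ℂ E]
    [Nontrivial E] {F : E → ℂ} {U : Set E} (hU : Bornology.IsBounded U) (hF : DiffContOnCl ℂ F U)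
    (hre : ∀ s ∈ frontier U, 0 ≤ (F s).re) {s : E} (hs : s ∈ closure U) : 0 ≤ (F s).re := by
  have hexp : DiffContOnCl ℂ (fun s ↦ cexp (-F s)) U :=
    ⟨hF.differentiableOn.neg.cexp, hF.continuousOn.neg.cexp⟩
  have hnorm := norm_le_of_forall_mem_frontier_norm_le hU hexp (C := 1) (z := s)
    (fun y hy ↦ by simpa [norm_exp] using hre y hy) hs
  simpa [norm_exp] using hnorm

theorem re_nonneg_of_forall_mem_sphere {F : ℂ → ℂ} {c : ℂ} {r R : ℝ} (hr : r ≠ 0) (hrR : r < R)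
    (hF : DifferentiableOn ℂ F (ball c R)) (hre : ∀ s ∈ sphere c r, 0 ≤ (F s).re) :
    ∀ s ∈ closedBall c r, 0 ≤ (F s).re := fun s hs ↦ by
  have hclosure : DifferentiableOn ℂ F (closure (ball c r)) :=
    hF.mono (closure_ball_subset_closedBall.trans (closedBall_subset_ball hrR))
  refine re_nonneg_of_forall_mem_frontier isBounded_ball hclosure.diffContOnCl ?_ ?_
  · rwa [frontier_ball c hr]
  · rwa [closure_ball c hr]

theorem mem_closure_sphere_diff_singleton {E : Type*} [NormedAddCommGroup E] [NormedSpace ℝ E]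
    (hE : 1 < Module.rank ℝ E) {c x : E} {r : ℝ} (hr : 0 < r) (hx : x ∈ sphere c r) :
    x ∈ closure (sphere c r \ {x}) := by
  have hantipode : c - (x - c) ∈ sphere c r := by
    rw [mem_sphere_iff_norm] at hx ⊢
    rw [sub_sub_cancel_left, norm_neg, hx]
  have hne : x ≠ c - (x - c) := fun h ↦ by
    have hself : x - c = 0 := by linear_combination (norm := module) (1 / 2 : ℝ) • h
    exact ne_of_mem_sphere hx hr.ne' (sub_eq_zero.1 hself)
  have hnontrivial : (sphere c r).Nontrivial := ⟨x, hx, _, hantipode, hne⟩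
  have hperfect := (isPreconnected_sphere hE c r).preperfect_of_nontrivial hnontrivial
  exact mem_closure_iff_nhdsWithin_neBot.2 (accPt_principal_iff_nhdsWithin.1 (hperfect x hx))

end MaximumPrinciple

section DifferenceQuotient

variable {𝕜 : Type*} [NontriviallyNormedField 𝕜] {f : 𝕜 → 𝕜} {z ζ : 𝕜}

theorem dslope_comm (f : 𝕜 → 𝕜) (z ζ : 𝕜) : dslope f z ζ = dslope f ζ z := by
  rcases eq_or_ne z ζ with rfl | hne
  · rfl
  · rw [dslope_of_ne f hne, dslope_of_ne f hne.symm, slope_comm]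

theorem hasDerivAt_dslope_of_ne (hf : DifferentiableAt 𝕜 f z) (hne : z ≠ ζ) :
    HasDerivAt (dslope f ζ) ((deriv f z - dslope f ζ z) / (z - ζ)) z := by
  have hsub : z - ζ ≠ 0 := sub_ne_zero.2 hne
  have hquot := (hf.hasDerivAt.sub_const (f ζ)).div ((hasDerivAt_id z).sub_const ζ) hsub
  refine (hquot.congr_of_eventuallyEq ?_).congr_deriv ?_
  · filter_upwards [dslope_eventuallyEq_slope_of_ne f hne] with w hw
    simp [hw, slope_def_field]
  · rw [dslope_of_ne f hne, slope_def_field]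
    simp only [id]
    field_simp

theorem deriv_dslope_eq_dslope_dslope (hf : DifferentiableAt 𝕜 f z) :
    deriv (dslope f ζ) z = dslope (dslope f z) z ζ := by
  rcases eq_or_ne z ζ with rfl | hne
  · rw [dslope_same]
  · rw [(hasDerivAt_dslope_of_ne hf hne).deriv, dslope_of_ne _ hne.symm, slope_def_field,
      dslope_same, dslope_comm, ← neg_sub z ζ, ← neg_sub (deriv f z), neg_div_neg_eq]

theorem logDeriv_dslope_of_ne (hf : DifferentiableAt 𝕜 f z) (hne : z ≠ ζ) (hfne : f z ≠ f ζ) :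
    logDeriv (dslope f ζ) z = deriv f z / (f z - f ζ) - 1 / (z - ζ) := by
  have hsub : z - ζ ≠ 0 := sub_ne_zero.2 hne
  have hfsub : f z - f ζ ≠ 0 := sub_ne_zero.2 hfne
  rw [logDeriv_apply, (hasDerivAt_dslope_of_ne hf hne).deriv, dslope_of_ne f hne, slope_def_field]
  field_simp

theorem hasDerivAt_logDeriv_dslope_of_ne [CompleteSpace 𝕜] (hf : AnalyticAt 𝕜 f z)
    (hne : z ≠ ζ) (hfne : f z ≠ f ζ) :
    HasDerivAt (logDeriv (dslope f ζ))
      (deriv (deriv f) z / (f z - f ζ) - (deriv f z / (f z - f ζ)) ^ 2 + 1 / (z - ζ) ^ 2) z := by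
  have hsub : z - ζ ≠ 0 := sub_ne_zero.2 hne
  have hfsub : f z - f ζ ≠ 0 := sub_ne_zero.2 hfne
  have hformula := (hf.deriv.differentiableAt.hasDerivAt.div
    (hf.differentiableAt.hasDerivAt.sub_const (f ζ)) hfsub).sub
    ((hasDerivAt_const z (1 : 𝕜)).div ((hasDerivAt_id z).sub_const ζ) hsub)
  refine (hformula.congr_of_eventuallyEq ?_).congr_deriv ?_
  · filter_upwards [hf.eventually_analyticAt, eventually_ne_nhds hne,
      hf.continuousAt.eventually_ne hfne] with w hw hwne hfwne
    simpa using logDeriv_dslope_of_ne hw.differentiableAt hwne hfwne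
  · simp only [id]
    field_simp
    ring

end DifferenceQuotient

section ConvexityKernel

/-- The two-variable kernel `2 z f'(z) / (f(z) - f(ζ)) - (z + ζ) / (z - ζ)`, whose real part is
nonnegative on a disk centred at `0` that `f` maps injectively onto a convex set. The logarithmic
derivative of the difference quotient extends the formula across `z = ζ`. -/
noncomputable def convexityKernel (f : ℂ → ℂ) (ζ z : ℂ) : ℂ :=
  1 + 2 * (z * logDeriv (dslope f ζ) z)

variable {f : ℂ → ℂ} {R : ℝ} {z ζ : ℂ}

theorem convexityKernel_of_ne (hf : DifferentiableAt ℂ f z) (hne : z ≠ ζ) (hfne : f z ≠ f ζ) :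
    convexityKernel f ζ z = 2 * (z * deriv f z / (f z - f ζ)) - (z + ζ) / (z - ζ) := by
  have hsub : z - ζ ≠ 0 := sub_ne_zero.2 hne
  rw [convexityKernel, logDeriv_dslope_of_ne hf hne hfne]
  field_simp
  ring

theorem convexityKernel_eq_dslope_dslope (hf : DifferentiableAt ℂ f z) :
    convexityKernel f ζ z = 1 + 2 * (z * (dslope (dslope f z) z ζ / dslope f z ζ)) := by
  rw [convexityKernel, logDeriv_apply, deriv_dslope_eq_dslope_dslope hf, dslope_comm f ζ z]

theorem differentiableOn_logDeriv_dslope {U : Set ℂ} (hU : IsOpen U) (hf : DifferentiableOn ℂ f U)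
    (hinj : InjOn f U) (hζ : ζ ∈ U) : DifferentiableOn ℂ (logDeriv (dslope f ζ)) U := by
  have hD := (differentiableOn_dslope (hU.mem_nhds hζ)).2 hf
  exact (hD.deriv hU).div hD fun z hz ↦ dslope_ne_zero_of_injOn hU hf hinj hζ hz

theorem differentiableOn_convexityKernel {U : Set ℂ} (hU : IsOpen U) (hf : DifferentiableOn ℂ f U)
    (hinj : InjOn f U) (hζ : ζ ∈ U) : DifferentiableOn ℂ (convexityKernel f ζ) U := by
  have hlog := differentiableOn_logDeriv_dslope hU hf hinj hζ
  exact ((differentiableOn_id.mul hlog).const_mul 2).const_add 1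

theorem differentiableOn_convexityKernel_left {U : Set ℂ} (hU : IsOpen U)
    (hf : DifferentiableOn ℂ f U) (hinj : InjOn f U) (hz : z ∈ U) :
    DifferentiableOn ℂ (convexityKernel f · z) U := by
  have hzU := hU.mem_nhds hz
  have hD := (differentiableOn_dslope hzU).2 hf
  have hDD := (differentiableOn_dslope hzU).2 hD
  have hquot := hDD.div hD fun ζ hζ ↦ dslope_ne_zero_of_injOn hU hf hinj hz hζ
  refine (((hquot.const_mul z).const_mul 2).const_add 1).congr fun ζ _ ↦ ?_
  exact convexityKernel_eq_dslope_dslope (hf.differentiableAt hzU)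

theorem re_add_div_sub_eq_zero_of_norm_eq (h : ‖z‖ = ‖ζ‖) : ((z + ζ) / (z - ζ)).re = 0 := by
  have hsq : normSq z = normSq ζ := by rw [normSq_eq_norm_sq, normSq_eq_norm_sq, h]
  rw [normSq_apply, normSq_apply] at hsq
  rw [div_re, ← add_div, div_eq_zero_iff]
  left
  simp only [add_re, sub_re, add_im, sub_im]
  linarith

theorem re_convexityKernel_nonneg_of_norm_eq (hf : DifferentiableOn ℂ f (ball 0 R))
    (hinj : InjOn f (ball 0 R)) (hconv : Convex ℝ (f '' ball 0 R)) (hz0 : z ≠ 0)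
    (hz : z ∈ ball 0 R) (heq : ‖ζ‖ = ‖z‖) : 0 ≤ (convexityKernel f ζ z).re := by
  have hsphere : ∀ s ∈ sphere (0 : ℂ) ‖z‖, s ∈ ball 0 R := fun s hs ↦
    sphere_subset_ball (mem_ball_zero_iff.1 hz) hs
  have hne : ∀ s ∈ sphere (0 : ℂ) ‖z‖ \ {z}, 0 ≤ (convexityKernel f s z).re := by
    rintro s ⟨hs, hsz⟩
    have hsz : z ≠ s := Ne.symm hsz
    have hnorm : ‖s‖ = ‖z‖ := mem_sphere_zero_iff_norm.1 hs
    rw [convexityKernel_of_ne (hf.differentiableAt (isOpen_ball.mem_nhds hz)) hsz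
      (hinj.ne hz (hsphere s hs) hsz), sub_re, re_add_div_sub_eq_zero_of_norm_eq hnorm.symm,
      sub_zero, ← ofReal_ofNat, re_ofReal_mul]
    exact mul_nonneg zero_le_two (re_mul_deriv_div_sub_nonneg hf hinj hconv hz hnorm.le)
  rcases eq_or_ne ζ z with rfl | hζz
  · have hcont : ContinuousAt (fun s ↦ (convexityKernel f s ζ).re) ζ :=
      continuous_re.continuousAt.comp
        ((differentiableOn_convexityKernel_left isOpen_ball hf hinj hz).continuousOn.continuousAt
          (isOpen_ball.mem_nhds hz))
    have hclosure : ζ ∈ closure (sphere 0 ‖ζ‖ \ {ζ}) :=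
      mem_closure_sphere_diff_singleton (rank_real_complex ▸ Cardinal.one_lt_two)
        (norm_pos_iff.2 hz0) (mem_sphere_zero_iff_norm.2 rfl)
    exact continuousWithinAt_const.closure_le hclosure hcont.continuousWithinAt hne
  · exact hne ζ ⟨mem_sphere_zero_iff_norm.2 heq, hζz⟩

theorem re_convexityKernel_nonneg_of_norm_le (hf : DifferentiableOn ℂ f (ball 0 R))
    (hinj : InjOn f (ball 0 R)) (hconv : Convex ℝ (f '' ball 0 R)) (hz : z ∈ ball 0 R)
    (hle : ‖ζ‖ ≤ ‖z‖) : 0 ≤ (convexityKernel f ζ z).re := by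
  rcases eq_or_ne z 0 with rfl | hz0
  · simp [convexityKernel]
  refine re_nonneg_of_forall_mem_sphere (norm_ne_zero_iff.2 hz0) (mem_ball_zero_iff.1 hz)
    (differentiableOn_convexityKernel_left isOpen_ball hf hinj hz) (fun s hs ↦ ?_) ζ
    (mem_closedBall_zero_iff.2 hle)
  exact re_convexityKernel_nonneg_of_norm_eq hf hinj hconv hz0 hz (mem_sphere_zero_iff_norm.1 hs)

theorem re_convexityKernel_nonneg (hf : DifferentiableOn ℂ f (ball 0 R))
    (hinj : InjOn f (ball 0 R)) (hconv : Convex ℝ (f '' ball 0 R)) (hζ : ζ ∈ ball 0 R)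
    (hz : z ∈ ball 0 R) : 0 ≤ (convexityKernel f ζ z).re := by
  rcases le_total ‖ζ‖ ‖z‖ with hle | hle
  · exact re_convexityKernel_nonneg_of_norm_le hf hinj hconv hz hle
  rcases eq_or_ne ζ 0 with rfl | hζ0
  · exact re_convexityKernel_nonneg_of_norm_le hf hinj hconv hz (by simp)
  refine re_nonneg_of_forall_mem_sphere (norm_ne_zero_iff.2 hζ0) (mem_ball_zero_iff.1 hζ)
    (differentiableOn_convexityKernel isOpen_ball hf hinj hζ) (fun s hs ↦ ?_) z
    (mem_closedBall_zero_iff.2 hle)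
  exact re_convexityKernel_nonneg_of_norm_le hf hinj hconv
    (sphere_subset_ball (mem_ball_zero_iff.1 hζ) hs) (mem_sphere_zero_iff_norm.1 hs).ge

end ConvexityKernel

section CoefficientInequalities

theorem norm_sub_le_norm_one_sub_conj_mul {x a : ℂ} (hx : ‖x‖ ≤ 1) (ha : ‖a‖ ≤ 1) :
    ‖x - a‖ ≤ ‖1 - conj a * x‖ := by
  have hidentity : ‖1 - conj a * x‖ ^ 2 - ‖x - a‖ ^ 2 = (1 - ‖x‖ ^ 2) * (1 - ‖a‖ ^ 2) := by
    simp only [Complex.sq_norm, normSq_apply, sub_re, sub_im, mul_re, mul_im, conj_re, conj_im,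
      one_re, one_im]
    ring
  have hprod : 0 ≤ (1 - ‖x‖ ^ 2) * (1 - ‖a‖ ^ 2) :=
    mul_nonneg (sub_nonneg.2 (pow_le_one₀ (norm_nonneg x) hx))
      (sub_nonneg.2 (pow_le_one₀ (norm_nonneg a) ha))
  exact le_of_sq_le_sq (by linarith) (norm_nonneg _)

theorem one_sub_conj_mul_ne_zero {x a : ℂ} (hx : ‖x‖ ≤ 1) (ha : ‖a‖ < 1) :
    1 - conj a * x ≠ 0 := by
  refine sub_ne_zero.2 fun h ↦ ?_
  have hlt : ‖conj a * x‖ < 1 := by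
    rw [norm_mul, norm_conj]
    exact mul_lt_one_of_nonneg_of_lt_one_left (norm_nonneg a) ha hx
  exact hlt.ne (by rw [← h, norm_one])

theorem hasDerivAt_mobius {w : ℂ → ℂ} {c w' : ℂ} (hw : HasDerivAt w w' c) (hc : ‖w c‖ < 1) :
    HasDerivAt (fun s ↦ (w s - w c) / (1 - conj (w c) * w s)) (w' / (1 - ‖w c‖ ^ 2 : ℝ)) c := by
  have hne := one_sub_conj_mul_ne_zero hc.le hc
  refine ((hw.sub_const (w c)).div ((hw.const_mul (conj (w c))).const_sub 1) hne).congr_deriv ?_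
  have hnorm : ((1 - ‖w c‖ ^ 2 : ℝ) : ℂ) = 1 - conj (w c) * w c := by
    push_cast
    rw [conj_mul']
  rw [hnorm, sub_self]
  field_simp
  ring

theorem norm_deriv_mul_le_one_sub_norm_sq {w : ℂ → ℂ} {c : ℂ} {R : ℝ} (hR : 0 < R)
    (hw : DifferentiableOn ℂ w (ball c R)) (hmaps : MapsTo w (ball c R) (closedBall 0 1)) :
    ‖deriv w c‖ * R ≤ 1 - ‖w c‖ ^ 2 := by
  have hcR : c ∈ ball c R := mem_ball_self hR
  have hbound : ∀ s ∈ ball c R, ‖w s‖ ≤ 1 := fun s hs ↦ mem_closedBall_zero_iff.1 (hmaps hs)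
  rcases (hbound c hcR).lt_or_eq with hlt | heq
  · let h : ℂ → ℂ := fun s ↦ (w s - w c) / (1 - conj (w c) * w s)
    have hh : DifferentiableOn ℂ h (ball c R) :=
      (hw.sub_const _).div ((hw.const_mul _).const_sub 1)
        fun s hs ↦ one_sub_conj_mul_ne_zero (hbound s hs) hlt
    have hh_maps : MapsTo h (ball c R) (closedBall (h c) 1) := fun s hs ↦ by
      simpa [h] using div_le_one_of_le₀
        (norm_sub_le_norm_one_sub_conj_mul (hbound s hs) hlt.le) (norm_nonneg _)
    have hpos : 0 < 1 - ‖w c‖ ^ 2 := sub_pos.2 (pow_lt_one₀ (norm_nonneg _) hlt two_ne_zero)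
    have hschwarz := norm_deriv_le_div_of_mapsTo_ball hh hh_maps hR
    have hw' := (hw.differentiableAt (isOpen_ball.mem_nhds hcR)).hasDerivAt
    rwa [(hasDerivAt_mobius hw' hlt).deriv, norm_div, norm_real, Real.norm_of_nonneg hpos.le,
      div_le_div_iff₀ hpos hR, one_mul] at hschwarz
  · have hconst : EqOn w (Function.const ℂ (w c)) (ball c R) :=
      eqOn_of_isPreconnected_of_isMaxOn_norm (convex_ball c R).isPreconnected isOpen_ball hw hcR
        fun s hs ↦ (hbound s hs).trans heq.ge
    have hderiv : deriv w c = 0 := by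
      rw [(hconst.eventuallyEq_of_mem (isOpen_ball.mem_nhds hcR)).deriv_eq]
      exact deriv_const c (w c)
    simp [hderiv, heq]

theorem norm_le_div_of_norm_mul_le {ω : ℂ → ℂ} {R M : ℝ} {z : ℂ}
    (hω : DifferentiableOn ℂ ω (ball 0 R)) (hbound : ∀ s ∈ ball (0 : ℂ) R, ‖s * ω s‖ ≤ M)
    (hz : z ∈ ball 0 R) : ‖ω z‖ ≤ M / R := by
  have hdslope : dslope (fun s ↦ s * ω s) 0 z = ω z := by
    rcases eq_or_ne z 0 with rfl | hz0
    · have hprod : HasDerivAt (fun s ↦ s * ω s) (1 * ω 0 + 0 * deriv ω 0) 0 :=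
        (hasDerivAt_id 0).mul (hω.differentiableAt (isOpen_ball.mem_nhds hz)).hasDerivAt
      simpa using hprod.deriv
    · simp [dslope_of_ne _ hz0, slope_def_field, hz0]
  have hdiff : DifferentiableOn ℂ (fun s ↦ s * ω s) (ball 0 R) := differentiableOn_id.mul hω
  rw [← hdslope]
  exact norm_dslope_le_div_of_mapsTo_ball hdiff (fun y hy ↦ by simpa using hbound y hy) hz

theorem norm_deriv_sub_sq_le_of_re_nonneg {q : ℂ → ℂ} (hq : DifferentiableOn ℂ q (ball 0 1))
    (hre : ∀ s ∈ ball (0 : ℂ) 1, 0 ≤ (1 + 2 * (s * q s)).re) :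
    ‖deriv q 0 - q 0 ^ 2‖ ≤ 1 - ‖q 0‖ ^ 2 := by
  have h0 : (0 : ℂ) ∈ ball (0 : ℂ) 1 := mem_ball_self one_pos
  have hre' : ∀ s ∈ ball (0 : ℂ) 1, 0 ≤ 1 + 2 * (s * q s).re := fun s hs ↦ by
    simpa only [add_re, one_re, ← ofReal_ofNat, re_ofReal_mul] using hre s hs
  have hden : ∀ s ∈ ball (0 : ℂ) 1, 1 + s * q s ≠ 0 := fun s hs hzero ↦ by
    have hzero_re : 1 + (s * q s).re = 0 := congrArg re hzero
    linarith [hre' s hs]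
  let ω : ℂ → ℂ := fun s ↦ q s / (1 + s * q s)
  have hω : DifferentiableOn ℂ ω (ball 0 1) :=
    hq.div ((differentiableOn_id.mul hq).const_add 1) hden
  have hcayley : ∀ s ∈ ball (0 : ℂ) 1, ‖s * ω s‖ ≤ 1 := fun s hs ↦ by
    have hsq : ‖s * q s‖ ^ 2 ≤ ‖1 + s * q s‖ ^ 2 := by
      rw [Complex.sq_norm, Complex.sq_norm, normSq_add, map_one, one_mul, conj_re]
      linarith [hre' s hs]
    rw [← mul_div_assoc, norm_div]
    exact div_le_one_of_le₀ (le_of_sq_le_sq hsq (norm_nonneg _)) (norm_nonneg _)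
  have hpick := norm_deriv_mul_le_one_sub_norm_sq one_pos hω fun s hs ↦
    mem_closedBall_zero_iff.2 (by simpa using norm_le_div_of_norm_mul_le hω hcayley hs)
  have hq0 := (hq.differentiableAt (isOpen_ball.mem_nhds h0)).hasDerivAt
  have hω' : deriv ω 0 = deriv q 0 - q 0 ^ 2 := by
    refine (hq0.div (((hasDerivAt_id (0 : ℂ)).mul hq0).const_add 1) (hden 0 h0)).deriv.trans ?_
    simp [sq]
  simpa [hω', ω] using hpick

theorem norm_deriv_logDeriv_dslope_sub_sq_le {f : ℂ → ℂ} (hf : DifferentiableOn ℂ f (ball 0 1))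
    (hinj : InjOn f (ball 0 1)) (hconv : Convex ℝ (f '' ball 0 1)) {ζ : ℂ} (hζ : ζ ∈ ball 0 1) :
    ‖deriv (logDeriv (dslope f ζ)) 0 - logDeriv (dslope f ζ) 0 ^ 2‖
      ≤ 1 - ‖logDeriv (dslope f ζ) 0‖ ^ 2 :=
  norm_deriv_sub_sq_le_of_re_nonneg (differentiableOn_logDeriv_dslope isOpen_ball hf hinj hζ)
    fun _ hs ↦ re_convexityKernel_nonneg hf hinj hconv hζ hs

theorem norm_div_sub_one_sub_mul_le {f : ℂ → ℂ} (hf : DifferentiableOn ℂ f (ball 0 1))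
    (hinj : InjOn f (ball 0 1)) (hconv : Convex ℝ (f '' ball 0 1)) (hf0 : f 0 = 0)
    (hf'0 : deriv f 0 = 1) {ζ : ℂ} (hζ : ζ ∈ ball 0 1) (hζ0 : ζ ≠ 0) :
    2 * ‖f ζ / ζ - 1 - deriv (deriv f) 0 / 2 * f ζ‖ ≤ ‖f ζ‖ ^ 2 - ‖f ζ / ζ - 1‖ ^ 2 := by
  have h0 : (0 : ℂ) ∈ ball (0 : ℂ) 1 := mem_ball_self one_pos
  have hne : f 0 ≠ f ζ := hinj.ne h0 hζ hζ0.symm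
  have hfζ : f ζ ≠ 0 := by rwa [hf0, ne_comm] at hne
  have hanalytic : AnalyticAt ℂ f 0 := hf.analyticAt (isOpen_ball.mem_nhds h0)
  have hbound := norm_deriv_logDeriv_dslope_sub_sq_le hf hinj hconv hζ
  rw [(hasDerivAt_logDeriv_dslope_of_ne hanalytic hζ0.symm hne).deriv,
    logDeriv_dslope_of_ne hanalytic.differentiableAt hζ0.symm hne, hf0, hf'0] at hbound
  have hfirst : 1 / (0 - f ζ) - 1 / (0 - ζ) = (f ζ / ζ - 1) / f ζ := by
    field_simp
    ring
  have hsecond : deriv (deriv f) 0 / (0 - f ζ) - (1 / (0 - f ζ)) ^ 2 + 1 / (0 - ζ) ^ 2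
      - ((f ζ / ζ - 1) / f ζ) ^ 2 = 2 * (f ζ / ζ - 1 - deriv (deriv f) 0 / 2 * f ζ) / f ζ ^ 2 := by
    field_simp
    ring
  have hpos : 0 < ‖f ζ‖ ^ 2 := by positivity
  rw [hfirst, hsecond, norm_div, norm_div, norm_pow, norm_mul, RCLike.norm_ofNat, div_pow,
    one_sub_div hpos.ne'] at hbound
  exact (div_le_div_iff_of_pos_right hpos).1 hbound

theorem neg_half_add_le_re_mul {f : ℂ → ℂ} (hf : DifferentiableOn ℂ f (ball 0 1))
    (hinj : InjOn f (ball 0 1)) (hconv : Convex ℝ (f '' ball 0 1)) (hf0 : f 0 = 0)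
    (hf'0 : deriv f 0 = 1) {ζ : ℂ} (hζ : ζ ∈ ball 0 1) (hζ0 : ζ ≠ 0) :
    -1 / 2 + 1 / 2 * (1 - ‖ζ‖ ^ 2) * ‖f ζ / ζ‖ ^ 2 ≤ (deriv (deriv f) 0 / 2 * f ζ).re := by
  have hbound := norm_div_sub_one_sub_mul_le hf hinj hconv hf0 hf'0 hζ hζ0
  have hre := re_le_norm (f ζ / ζ - 1 - deriv (deriv f) 0 / 2 * f ζ)
  rw [sub_re, sub_re, one_re] at hre
  have hexpand (x : ℂ) : ‖x - 1‖ ^ 2 = ‖x‖ ^ 2 + 1 - 2 * x.re := by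
    simp [Complex.sq_norm, normSq_sub]
  have hnorm : ‖f ζ‖ ^ 2 = ‖ζ‖ ^ 2 * ‖f ζ / ζ‖ ^ 2 := by
    rw [← mul_pow, ← norm_mul, mul_div_cancel₀ _ hζ0]
  rw [hexpand, hnorm] at hbound
  linarith

end CoefficientInequalities

theorem convex_second_coeff_estimate
    (f : ℂ → ℂ)
    (hdiff : DifferentiableOn ℂ f (ball (0:ℂ) 1))
    (hinj : Set.InjOn f (ball (0:ℂ) 1))
    (hconv : Convex ℝ (f '' ball (0:ℂ) 1))
    (hf0 : f 0 = 0) (hf'0 : deriv f 0 = 1)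
    (a₂ : ℂ) (ha₂ : a₂ = deriv (deriv f) 0 / 2) :
    (∀ ζ ∈ ball (0:ℂ) 1, ζ ≠ 0 →
      (a₂ * f ζ).re ≥ -1/2 + (1/2) * (1 - ‖ζ‖^2) * ‖f ζ / ζ‖^2) ∧
    (∀ ζ ∈ ball (0:ℂ) 1, (a₂ * f ζ).re > -1/2) := by
  subst ha₂
  refine ⟨fun ζ hζ hζ0 ↦ neg_half_add_le_re_mul hdiff hinj hconv hf0 hf'0 hζ hζ0, fun ζ hζ ↦ ?_⟩
  rcases eq_or_ne ζ 0 with rfl | hζ0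
  · norm_num [hf0]
  have hfζ : f ζ ≠ 0 := hf0 ▸ hinj.ne hζ (mem_ball_self one_pos) hζ0
  have hone_sub : 0 < 1 - ‖ζ‖ ^ 2 :=
    sub_pos.2 (pow_lt_one₀ (norm_nonneg ζ) (mem_ball_zero_iff.1 hζ) two_ne_zero)
  have hnorm : 0 < ‖f ζ / ζ‖ := norm_pos_iff.2 (div_ne_zero hfζ hζ0)
  calc -1 / 2 < -1 / 2 + 1 / 2 * (1 - ‖ζ‖ ^ 2) * ‖f ζ / ζ‖ ^ 2 :=
        lt_add_of_pos_right _ (by positivity)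
    _ ≤ _ := neg_half_add_le_re_mul hdiff hinj hconv hf0 hf'0 hζ hζ0
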